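/- arXiv:2410.07960 — 2 statements merged into one kernel-verified Lean document; each statement's English description precedes it below -/
import Mathlib

section
/- For parameters β, α, γ, the operators T_i = -β + ((α+β+γ)x_i + γ x_{i+1} + 1 + (β+γ)(α+γ) x_i x_{i+1})∂_i on ℂ[x_1, x_2, x_3] satisfy the braid relation T_1 T_2 T_1 = T_2 T_1 T_2. -/
open MvPolynomial

/-!
Let `P u v = (α + β + γ) u + γ v + 1 + (β + γ)(α + γ) u v`, so that `Tᵢ = Uᵢ - β` with
`Uᵢ = P(xᵢ, xᵢ₊₁) ∂ᵢ`. Since `∂₁ P(x₁, x₂) = α + β`, one has `Uᵢ² = (α + β) Uᵢ`, and expanding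
products reduces the braid relation for `T₁, T₂` to
`U₁ U₂ U₁ - αβ U₁ = U₂ U₁ U₂ - αβ U₂`.
Now move all polynomials to the left by the twisted Leibniz rule. In `U₁ U₂ U₁` the `∂₁ ∂₁`-term
vanishes, and so does the `∂₂ ∂₁`-term, because `P(x₁, x₃) P(x₂, x₃)` is symmetric in `x₁, x₂`:
`U₁ U₂ U₁ = P(x₁, x₂) ∂₁(P(x₂, x₃) ∂₂ P(x₁, x₂)) ∂₁ + P(x₁, x₂) P(x₂, x₃) P(x₁, x₃) ∂₁ ∂₂ ∂₁`.
Here `∂₁(P(x₂, x₃) ∂₂ P(x₁, x₂))` is the constant `αβ`. The same holds with the indices exchanged,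
so the relation follows from the braid relation for divided differences.
-/

theorem braid_sub_algebraMap_of_quadratic {R E : Type*} [CommRing R] [Ring E] [Algebra R E]
    {α β : R} {u v : E} (hu : u * u = (α + β) • u) (hv : v * v = (α + β) • v)
    (huv : u * v * u - (α * β) • u = v * u * v - (α * β) • v) :
    (u - algebraMap R E β) * (v - algebraMap R E β) * (u - algebraMap R E β) =
      (v - algebraMap R E β) * (u - algebraMap R E β) * (v - algebraMap R E β) := by
  simp only [Algebra.algebraMap_eq_smul_one, sub_mul, mul_sub, smul_mul_assoc, mul_smul_comm,
    one_mul, mul_one, hu, hv]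
  linear_combination (norm := module) huv

section DividedDifference

variable {R A : Type*} [CommRing R] [CommRing A] [Algebra R A]

/-- `D` is the divided difference operator `f ↦ (s f - f) / d` attached to an involution `s` which
negates `d`. The division is encoded by cancellability of `d`, which determines `D`. -/
structure IsDividedDifference (s : A →ₐ[R] A) (d : A) (D : A → A) : Prop where
  involutive : Function.Involutive s
  map_root : s d = -d
  isLeftRegular : IsLeftRegular d
  root_mul_apply : ∀ f, d * D f = s f - f

namespace IsDividedDifference

section Single

variable {s : A →ₐ[R] A} {d : A} {D : A → A} (h : IsDividedDifference s d D)
include h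

theorem apply_eq_of_root_mul_eq {f g : A} (hg : d * g = s f - f) : D f = g :=
  h.isLeftRegular ((h.root_mul_apply f).trans hg.symm)

theorem apply_add (f g : A) : D (f + g) = D f + D g := by
  apply h.apply_eq_of_root_mul_eq
  rw [map_add]
  linear_combination h.root_mul_apply f + h.root_mul_apply g

theorem apply_smul (c : R) (f : A) : D (c • f) = c • D f := by
  apply h.apply_eq_of_root_mul_eq
  rw [mul_smul_comm, h.root_mul_apply, map_smul, smul_sub]

theorem apply_mul (f g : A) : D (f * g) = D f * g + s f * D g := by
  apply h.apply_eq_of_root_mul_eq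
  rw [map_mul]
  linear_combination g * h.root_mul_apply f + s f * h.root_mul_apply g

theorem map_apply (f : A) : s (D f) = D f := by
  apply h.isLeftRegular
  have hs := congrArg s (h.root_mul_apply f)
  rw [map_mul, map_sub, h.map_root, h.involutive] at hs
  linear_combination -hs - h.root_mul_apply f

theorem apply_eq_zero_of_map_eq {f : A} (hf : s f = f) : D f = 0 :=
  h.apply_eq_of_root_mul_eq (by rw [hf, mul_zero, sub_self])

theorem apply_mul_of_map_eq {f : A} (hf : s f = f) (g : A) : D (f * g) = f * D g := by
  rw [h.apply_mul, h.apply_eq_zero_of_map_eq hf, hf, zero_mul, zero_add]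

theorem apply_apply (f : A) : D (D f) = 0 :=
  h.apply_eq_zero_of_map_eq (h.map_apply f)

theorem apply_mul_apply (p f : A) : D (p * D f) = D p * D f := by
  rw [h.apply_mul, h.apply_apply, mul_zero, add_zero]

/-- The linear operator `p D`, where `D` is a divided difference operator; it is the `Uᵢ` of the
proof for a suitable weight `p`. -/
def weighted (p : A) : Module.End R A where
  toFun f := p * D f
  map_add' f g := by rw [h.apply_add, mul_add]
  map_smul' c f := by rw [h.apply_smul, mul_smul_comm, RingHom.id_apply]

theorem weighted_apply (p f : A) : h.weighted p f = p * D f := rfl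

/-- The operator `-β + p D`, where `D` is a divided difference operator; it is the `Tᵢ` of the
theorem for a suitable weight `p`. -/
def heckeOperator (β : R) (p : A) : Module.End R A :=
  h.weighted p - algebraMap R (Module.End R A) β

theorem heckeOperator_apply (β : R) (p f : A) :
    h.heckeOperator β p f = algebraMap R A (-β) * f + p * D f := by
  rw [heckeOperator, LinearMap.sub_apply, Module.algebraMap_end_apply, weighted_apply,
    Algebra.smul_def, map_neg]
  ring

theorem weighted_mul_self {p : A} {c : R} (hp : D p = algebraMap R A c) :
    h.weighted p * h.weighted p = c • h.weighted p := by
  ext f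
  simp only [Module.End.mul_apply, LinearMap.smul_apply, weighted_apply, h.apply_mul_apply, hp]
  rw [Algebra.smul_def]
  ring

end Single

section Pair

variable {s₁ s₂ : A →ₐ[R] A} {a b : A} {D₁ D₂ : A → A}
  (h₁ : IsDividedDifference s₁ a D₁) (h₂ : IsDividedDifference s₂ b D₂)
include h₁ h₂

theorem root_mul_apply_apply_apply (hb : s₁ b = a + b) (ha : s₂ a = a + b) (f : A) :
    a * b * (a + b) * D₁ (D₂ (D₁ f)) =
      s₁ (s₂ (s₁ f)) - s₁ (s₂ f) - s₂ (s₁ f) + s₁ f + s₂ f - f := by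
  have outer := h₁.root_mul_apply (D₂ (D₁ f))
  have middle := h₂.root_mul_apply (D₁ f)
  have inner := h₁.root_mul_apply f
  have s₁_middle : (a + b) * s₁ (D₂ (D₁ f)) = s₁ (s₂ (D₁ f)) - D₁ f := by
    rw [← hb, ← map_mul, middle, map_sub, h₁.map_apply]
  have s₂_inner : (a + b) * s₂ (D₁ f) = s₂ (s₁ f) - s₂ f := by
    rw [← ha, ← map_mul, inner, map_sub]
  have s₁_s₂_inner : b * s₁ (s₂ (D₁ f)) = s₁ (s₂ (s₁ f)) - s₁ (s₂ f) := by
    rw [← map_sub, ← s₂_inner, map_mul, map_add, h₁.map_root, hb, neg_add_cancel_left]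
  linear_combination b * (a + b) * outer + b * s₁_middle - (a + b) * middle
    + s₁_s₂_inner - s₂_inner + inner

theorem isLeftRegular_add_root (ha : s₂ a = a + b) : IsLeftRegular (a + b) := by
  intro f g hfg
  apply h₂.involutive.injective
  apply h₁.isLeftRegular
  have hfg' := congrArg s₂ hfg
  simpa only [← ha, map_mul, h₂.involutive a] using hfg'

theorem braid (hb : s₁ b = a + b) (ha : s₂ a = a + b)
    (hs : ∀ f, s₁ (s₂ (s₁ f)) = s₂ (s₁ (s₂ f))) (f : A) :
    D₁ (D₂ (D₁ f)) = D₂ (D₁ (D₂ f)) := by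
  apply (h₁.isLeftRegular.mul h₂.isLeftRegular).mul (h₁.isLeftRegular_add_root h₂ ha)
  have h₁₂₁ := h₁.root_mul_apply_apply_apply h₂ hb ha f
  have h₂₁₂ := h₂.root_mul_apply_apply_apply h₁ (ha.trans (add_comm a b))
    (hb.trans (add_comm a b)) f
  linear_combination h₁₂₁ - h₂₁₂ + hs f

theorem weighted_mul_weighted_mul_weighted {p q : A} {c : R}
    (hc : D₁ (q * D₂ p) = algebraMap R A c) (hpq : s₁ (q * s₂ p) = q * s₂ p) (f : A) :
    (h₁.weighted p * h₂.weighted q * h₁.weighted p) f =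
      (c • h₁.weighted p) f + p * q * s₂ p * D₁ (D₂ (D₁ f)) := by
  have leibniz : D₁ (q * D₂ (p * D₁ f)) =
      D₁ (q * D₂ p) * D₁ f + q * s₂ p * D₁ (D₂ (D₁ f)) := by
    rw [h₂.apply_mul, mul_add, ← mul_assoc, ← mul_assoc, h₁.apply_add, h₁.apply_mul_apply,
      h₁.apply_mul_of_map_eq hpq]
  simp only [Module.End.mul_apply, LinearMap.smul_apply, weighted_apply]
  rw [leibniz, hc, Algebra.smul_def]
  ring

end Pair

end IsDividedDifference

/-- The coefficient `(α+β+γ)u + γv + 1 + (β+γ)(α+γ)uv` of the divided difference in `Tᵢ`, with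
`u` and `v` in place of `xᵢ` and `xᵢ₊₁`. -/
def heckeWeight (α β γ : R) (u v : A) : A :=
  algebraMap R A (α + β + γ) * u + algebraMap R A γ * v + 1 +
    algebraMap R A ((β + γ) * (α + γ)) * (u * v)

theorem map_heckeWeight (s : A →ₐ[R] A) (α β γ : R) (u v : A) :
    s (heckeWeight α β γ u v) = heckeWeight α β γ (s u) (s v) := by
  simp only [heckeWeight, map_add, map_mul, map_one, AlgHom.commutes]

namespace IsDividedDifference

section Weight

variable {s : A →ₐ[R] A} {u v : A} {D : A → A} (h : IsDividedDifference s (v - u) D)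
  (hu : s u = v) (α β γ : R)
include h hu

theorem map_right : s v = u := by rw [← hu, h.involutive]

theorem apply_heckeWeight : D (heckeWeight α β γ u v) = algebraMap R A (α + β) := by
  apply h.apply_eq_of_root_mul_eq
  rw [map_heckeWeight, hu, h.map_right hu]
  simp only [heckeWeight, map_add]
  ring

theorem apply_heckeWeight_left {w : A} (hw : s w = w) :
    D (heckeWeight α β γ v w) =
      -(algebraMap R A (α + β + γ) + algebraMap R A ((β + γ) * (α + γ)) * w) := by
  apply h.apply_eq_of_root_mul_eq
  rw [map_heckeWeight, h.map_right hu, hw]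
  simp only [heckeWeight]
  ring

theorem apply_heckeWeight_right {w : A} (hw : s w = w) :
    D (heckeWeight α β γ w u) =
      algebraMap R A γ + algebraMap R A ((β + γ) * (α + γ)) * w := by
  apply h.apply_eq_of_root_mul_eq
  rw [map_heckeWeight, hu, hw]
  simp only [heckeWeight]
  ring

end Weight

section HeckeBraid

variable {s₁ s₂ : A →ₐ[R] A} {x y z : A} {D₁ D₂ : A → A}
  (h₁ : IsDividedDifference s₁ (y - x) D₁) (h₂ : IsDividedDifference s₂ (z - y) D₂)
  (h₁x : s₁ x = y) (h₁z : s₁ z = z) (h₂x : s₂ x = x) (h₂y : s₂ y = z) (α β γ : R)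
include h₁ h₂ h₁x h₁z h₂x h₂y

theorem apply_heckeWeight_mul_apply_heckeWeight_left :
    D₁ (heckeWeight α β γ y z * D₂ (heckeWeight α β γ x y)) = algebraMap R A (α * β) := by
  rw [h₂.apply_heckeWeight_right h₂y α β γ h₂x]
  apply h₁.apply_eq_of_root_mul_eq
  simp only [map_mul, map_heckeWeight, map_add, AlgHom.commutes, h₁x, h₁.map_right h₁x, h₁z]
  simp only [heckeWeight, map_add, map_mul]
  ring

theorem apply_heckeWeight_mul_apply_heckeWeight_right :
    D₂ (heckeWeight α β γ x y * D₁ (heckeWeight α β γ y z)) = algebraMap R A (α * β) := by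
  rw [h₁.apply_heckeWeight_left h₁x α β γ h₁z]
  apply h₂.apply_eq_of_root_mul_eq
  simp only [map_mul, map_neg, map_heckeWeight, map_add, AlgHom.commutes, h₂y,
    h₂.map_right h₂y, h₂x]
  simp only [heckeWeight, map_add, map_mul]
  ring

theorem weighted_heckeWeight_braid (hs : ∀ f, s₁ (s₂ (s₁ f)) = s₂ (s₁ (s₂ f))) :
    let U₁ := h₁.weighted (heckeWeight α β γ x y)
    let U₂ := h₂.weighted (heckeWeight α β γ y z)
    U₁ * U₂ * U₁ - (α * β) • U₁ = U₂ * U₁ * U₂ - (α * β) • U₂ := by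
  intro U₁ U₂
  have h₁y : s₁ y = x := h₁.map_right h₁x
  have h₂z : s₂ z = y := h₂.map_right h₂y
  have hD : ∀ f, D₁ (D₂ (D₁ f)) = D₂ (D₁ (D₂ f)) :=
    h₁.braid h₂ (by rw [map_sub, h₁z, h₁y]; ring) (by rw [map_sub, h₂y, h₂x]; ring) hs
  have hs₂p : s₂ (heckeWeight α β γ x y) = heckeWeight α β γ x z := by
    rw [map_heckeWeight, h₂x, h₂y]
  have hs₁q : s₁ (heckeWeight α β γ y z) = heckeWeight α β γ x z := by
    rw [map_heckeWeight, h₁y, h₁z]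
  ext f
  have hU₁₂₁ := h₁.weighted_mul_weighted_mul_weighted h₂
    (h₁.apply_heckeWeight_mul_apply_heckeWeight_left h₂ h₁x h₁z h₂x h₂y α β γ)
    (by simp only [map_mul, map_heckeWeight, h₁x, h₁y, h₁z, h₂x, h₂y, mul_comm]) f
  have hU₂₁₂ := h₂.weighted_mul_weighted_mul_weighted h₁
    (h₁.apply_heckeWeight_mul_apply_heckeWeight_right h₂ h₁x h₁z h₂x h₂y α β γ)
    (by simp only [map_mul, map_heckeWeight, h₁y, h₁z, h₂x, h₂y, h₂z, mul_comm]) f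
  rw [LinearMap.sub_apply, LinearMap.sub_apply, hU₁₂₁, hU₂₁₂, hs₂p, hs₁q, hD]
  ring

theorem heckeOperator_braid (hs : ∀ f, s₁ (s₂ (s₁ f)) = s₂ (s₁ (s₂ f))) :
    let T₁ := h₁.heckeOperator β (heckeWeight α β γ x y)
    let T₂ := h₂.heckeOperator β (heckeWeight α β γ y z)
    T₁ * T₂ * T₁ = T₂ * T₁ * T₂ :=
  braid_sub_algebraMap_of_quadratic
    (h₁.weighted_mul_self (h₁.apply_heckeWeight h₁x α β γ))
    (h₂.weighted_mul_self (h₂.apply_heckeWeight h₂y α β γ))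
    (h₁.weighted_heckeWeight_braid h₂ h₁x h₁z h₂x h₂y α β γ hs)

end HeckeBraid

end IsDividedDifference

end DividedDifference

section MvPolynomial

variable {σ R : Type*} [CommRing R]

theorem isLeftRegular_X_sub_X {i j : σ} (hij : i ≠ j) :
    IsLeftRegular (X j - X i : MvPolynomial σ R) := by
  classical
  -- The automorphism `X j ↦ X j + X i` carries `X j - X i` to the regular element `X j`.
  let φ : MvPolynomial σ R →ₐ[R] MvPolynomial σ R := aeval (Function.update X j (X j + X i))
  let ψ : MvPolynomial σ R →ₐ[R] MvPolynomial σ R := aeval (Function.update X j (X j - X i))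
  have hψφ : ψ.comp φ = AlgHom.id R _ := by
    ext1 k
    rcases eq_or_ne k j with rfl | hk
    · simp [φ, ψ, hij]
    · simp [φ, ψ, hk]
  have hφ : φ (X j - X i) = X j := by simp [φ, hij]
  intro f g hfg
  have hφ_injective : Function.Injective φ :=
    Function.LeftInverse.injective (g := ψ) (DFunLike.congr_fun hψφ)
  apply hφ_injective
  apply isRegular_X (n := j).left
  simpa only [map_mul, hφ] using congrArg φ hfg

variable [DecidableEq σ]

theorem isDividedDifference_rename_swap {i j : σ} (hij : i ≠ j)
    {D : MvPolynomial σ R → MvPolynomial σ R}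
    (hD : ∀ f, (X j - X i) * D f = rename (Equiv.swap i j) f - f) :
    IsDividedDifference (rename (R := R) (Equiv.swap i j)) (X j - X i) D where
  involutive := rename_leftInverse (Equiv.swap_apply_self i j)
  map_root := by simp
  isLeftRegular := isLeftRegular_X_sub_X hij
  root_mul_apply := hD

theorem rename_swap_braid {i j k : σ} (hij : i ≠ j) (hik : i ≠ k) (hjk : j ≠ k)
    (f : MvPolynomial σ R) :
    rename (Equiv.swap i j) (rename (Equiv.swap j k) (rename (Equiv.swap i j) f)) =
      rename (Equiv.swap j k) (rename (Equiv.swap i j) (rename (Equiv.swap j k) f)) := by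
  have hswap : Equiv.swap i j * Equiv.swap j k * Equiv.swap i j =
      Equiv.swap j k * Equiv.swap i j * Equiv.swap j k := by
    rw [Equiv.swap_mul_swap_mul_swap hij hik, Equiv.swap_comm i j, Equiv.swap_comm j k,
      Equiv.swap_mul_swap_mul_swap hjk.symm hik.symm, Equiv.swap_comm]
  simp only [rename_rename, ← Equiv.Perm.coe_mul, ← mul_assoc, hswap]

theorem hecke_braid_relation_general {i j k : σ} (hij : i ≠ j) (hik : i ≠ k) (hjk : j ≠ k)
    (α β γ : R) {D₁ D₂ T₁ T₂ : MvPolynomial σ R → MvPolynomial σ R}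
    (hD₁ : ∀ f, (X j - X i) * D₁ f = rename (Equiv.swap i j) f - f)
    (hD₂ : ∀ f, (X k - X j) * D₂ f = rename (Equiv.swap j k) f - f)
    (hT₁ : ∀ f, T₁ f = C (-β) * f +
      (C (α + β + γ) * X i + C γ * X j + 1 + C ((β + γ) * (α + γ)) * (X i * X j)) * D₁ f)
    (hT₂ : ∀ f, T₂ f = C (-β) * f +
      (C (α + β + γ) * X j + C γ * X k + 1 + C ((β + γ) * (α + γ)) * (X j * X k)) * D₂ f)
    (f : MvPolynomial σ R) :
    T₁ (T₂ (T₁ f)) = T₂ (T₁ (T₂ f)) := by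
  have h₁ := isDividedDifference_rename_swap hij hD₁
  have h₂ := isDividedDifference_rename_swap hjk hD₂
  have hT₁' : T₁ = h₁.heckeOperator β (heckeWeight α β γ (X i) (X j)) := by
    ext1 g
    rw [hT₁, h₁.heckeOperator_apply, heckeWeight, algebraMap_eq]
  have hT₂' : T₂ = h₂.heckeOperator β (heckeWeight α β γ (X j) (X k)) := by
    ext1 g
    rw [hT₂, h₂.heckeOperator_apply, heckeWeight, algebraMap_eq]
  have hbraid := h₁.heckeOperator_braid h₂ (by simp)
    (by rw [rename_X, Equiv.swap_apply_of_ne_of_ne hik.symm hjk.symm])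
    (by rw [rename_X, Equiv.swap_apply_of_ne_of_ne hij hik]) (by simp) α β γ
    (rename_swap_braid hij hik hjk)
  rw [hT₁', hT₂']
  exact DFunLike.congr_fun hbraid f

end MvPolynomial

/-- The operators `T_i = -β + ((α+β+γ)x_i + γ x_{i+1} + 1 + (β+γ)(α+γ) x_i x_{i+1})∂_i`
on `ℂ[x_1, x_2, x_3]` satisfy the braid relation `T_1 T_2 T_1 = T_2 T_1 T_2`. -/
theorem hecke_braid_relation (α β γ : ℂ)
    (D₁ D₂ T₁ T₂ : MvPolynomial (Fin 3) ℂ → MvPolynomial (Fin 3) ℂ)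
    (hD₁ : ∀ f, (X 1 - X 0) * D₁ f = rename (Equiv.swap 0 1) f - f)
    (hD₂ : ∀ f, (X 2 - X 1) * D₂ f = rename (Equiv.swap 1 2) f - f)
    (hT₁ : ∀ f, T₁ f = C (-β) * f +
      (C (α + β + γ) * X 0 + C γ * X 1 + 1 + C ((β + γ) * (α + γ)) * (X 0 * X 1)) * D₁ f)
    (hT₂ : ∀ f, T₂ f = C (-β) * f +
      (C (α + β + γ) * X 1 + C γ * X 2 + 1 + C ((β + γ) * (α + γ)) * (X 1 * X 2)) * D₂ f) :
    ∀ f, T₁ (T₂ (T₁ f)) = T₂ (T₁ (T₂ f)) :=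
  hecke_braid_relation_general (by decide) (by decide) (by decide) α β γ hD₁ hD₂ hT₁ hT₂
end

section
/- There exist a permutation w in S_4 and a choice of evaluation of parameters such that the Kirillov polynomial KN_w^{(β,α,γ)}(x; 0) := T_{i_1} ⋯ T_{i_ℓ}(x_1³ x_2² x_3), computed via a reduced word for w using the operators T_i = -β + ((α+β+γ)x_i + γ x_{i+1} + 1 + (β+γ)(α+γ)x_i x_{i+1})∂_i, has a negative coefficient as a polynomial in ℤ[β, α, γ][x_1, x_2, x_3, x_4]; specifically, this holds for the permutation w = (1 3 2 4) in cycle notation. -/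
open MvPolynomial

/-!
A polynomial with nonnegative coefficients is nonnegative at nonnegative points, so it suffices to
find one nonnegative rational point at which the polynomial takes a negative value. At a point with
distinct coordinates, `∂ᵢ f` is an honest quotient of values of `f`, so `T₁T₂T₃T₁T₂(x₁³x₂²x₃)` can
be evaluated from values of the monomial without expanding the polynomial. A suitable point exists
because the negative term `-β⁴γ²x₁²x₂²x₃²x₄` is a vertex of the Newton polytope, so it dominates
all the others in some direction.
-/

section Positivity

variable {σ R A : Type*} [CommSemiring R] [CommSemiring A] [PartialOrder A] [IsOrderedRing A]
  [Algebra R A] {p : MvPolynomial σ R} {v : σ → A}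

theorem aeval_nonneg_of_coeff_nonneg [Preorder R] [PosSMulMono R A] (hp : ∀ d, 0 ≤ coeff d p)
    (hv : 0 ≤ v) : 0 ≤ aeval v p := by
  rw [aeval_def, eval₂_eq]
  refine Finset.sum_nonneg fun d _ ↦ ?_
  rw [← Algebra.smul_def]
  exact smul_nonneg (hp d) (Finset.prod_nonneg fun i _ ↦ pow_nonneg (hv i) _)

theorem exists_coeff_neg_of_aeval_neg [LinearOrder R] [PosSMulMono R A] (hv : 0 ≤ v)
    (h : aeval v p < 0) : ∃ d, coeff d p < 0 := by
  contrapose! h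
  exact (aeval_nonneg_of_coeff_nonneg h hv).not_gt

end Positivity

section DividedDifference

variable {σ R K : Type*} [DecidableEq σ] [Field K]

/-- The divided difference `(s F - F) / (x_j - x_i)` of a function `F` of the variables `x`, where
`s` swaps `x_i` and `x_j`. It is `0`, by division by zero, where `x_i = x_j`. -/
def dividedDifference (i j : σ) (F : (σ → K) → K) (v : σ → K) : K :=
  (F (v ∘ Equiv.swap i j) - F v) / (v j - v i)

theorem aeval_eq_dividedDifference [CommRing R] [Algebra R K] {i j : σ} {f g : MvPolynomial σ R}
    (h : (X j - X i) * g = rename (Equiv.swap i j) f - f) {v : σ → K} (hv : v i ≠ v j) :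
    aeval v g = dividedDifference i j (fun w ↦ aeval w f) v := by
  rw [dividedDifference, eq_div_iff (sub_ne_zero.mpr hv.symm), mul_comm]
  simpa only [map_mul, map_sub, aeval_X, aeval_rename] using congrArg (aeval v) h

theorem dividedDifference_congr {i j : σ} {F G : (σ → K) → K}
    (h : Set.EqOn F G {v | v.Injective}) :
    Set.EqOn (dividedDifference i j F) (dividedDifference i j G) {v | v.Injective} := by
  intro v hv
  have hswap : (v ∘ Equiv.swap i j).Injective := hv.comp (Equiv.swap i j).injective
  rw [dividedDifference, dividedDifference, h hv, h hswap]

end DividedDifference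

section KirillovOperator

variable {R K : Type*} [Field K]

/-- Kirillov's operator `-β + ((α+β+γ)x_i + γx_j + 1 + (β+γ)(α+γ)x_i x_j)∂` acting on functions of
`(β, α, γ, x₁, x₂, x₃, x₄)`, where `∂` is the divided difference in the coordinates `i` and `j`. -/
def kirillovOperator (i j : Fin 7) (F : (Fin 7 → K) → K) (v : Fin 7 → K) : K :=
  -v 0 * F v + ((v 1 + v 0 + v 2) * v i + v 2 * v j + 1
    + (v 0 + v 2) * (v 1 + v 2) * (v i * v j)) * dividedDifference i j F v

theorem eqOn_aeval_kirillovOperator [CommRing R] [Algebra R K] {i j : Fin 7} (hij : i ≠ j)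
    {f Df Tf : MvPolynomial (Fin 7) R} {F : (Fin 7 → K) → K}
    (hD : (X j - X i) * Df = rename (Equiv.swap i j) f - f)
    (hT : Tf = -X 0 * f + ((X 1 + X 0 + X 2) * X i + X 2 * X j + 1
      + (X 0 + X 2) * (X 1 + X 2) * (X i * X j)) * Df)
    (hF : Set.EqOn (fun v ↦ aeval v f) F {v | v.Injective}) :
    Set.EqOn (fun v ↦ aeval v Tf) (kirillovOperator i j F) {v | v.Injective} := by
  intro v hv
  have hDf : aeval v Df = dividedDifference i j F v :=
    (aeval_eq_dividedDifference hD (hv.ne hij)).trans (dividedDifference_congr hF hv)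
  have hf : aeval v f = F v := hF hv
  simp only [hT, kirillovOperator, map_add, map_mul, map_neg, map_one, aeval_X, hDf, hf]

end KirillovOperator

/-- The point `β = 10`, `α = 0`, `γ = 1/20`, `x = (1, 2, 3, 4)`, at which the Kirillov polynomial of
`w = (1 3 2 4)` is negative. It was found by a numerical search. -/
def negativePoint : Fin 7 → ℚ := ![10, 0, 1 / 20, 1, 2, 3, 4]

theorem negativePoint_nonneg : 0 ≤ negativePoint :=
  Pi.le_def.mpr (by decide +kernel)

theorem negativePoint_injective : negativePoint.Injective := by
  decide +kernel

theorem kirillovOperator_comp_negativePoint_neg :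
    kirillovOperator 3 4 (kirillovOperator 4 5 (kirillovOperator 5 6 (kirillovOperator 3 4
      (kirillovOperator 4 5 fun v ↦ v 3 ^ 3 * v 4 ^ 2 * v 5)))) negativePoint < 0 := by
  decide +kernel

/-- Kirillov's positivity conjecture fails: for the permutation `w = (1 3 2 4)` (in cycle
notation, with reduced word `w = s₁s₂s₃s₁s₂`), the Kirillov polynomial
`KN_w^{(β,α,γ)}(x; 0) = T₁T₂T₃T₁T₂(x₁³x₂²x₃)` has a negative coefficient when viewed in
`ℤ[β,α,γ,x₁,x₂,x₃,x₄]`.  Here the variables of `MvPolynomial (Fin 7) ℤ` are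
`X 0 = β`, `X 1 = α`, `X 2 = γ`, and `X (3+i) = xᵢ₊₁` for `0 ≤ i ≤ 3`; the operator
`T (k)` (for `k = 0, 1, 2`, corresponding to `T_{k+1}`) is
`-β + ((α+β+γ)x_{k+1} + γx_{k+2} + 1 + (β+γ)(α+γ)x_{k+1}x_{k+2})∂_{k+1}`. -/
theorem kirillov_negative_coefficient
    (D T : Fin 3 → (MvPolynomial (Fin 7) ℤ → MvPolynomial (Fin 7) ℤ))
    (hD : ∀ k : Fin 3, ∀ f,
      (X (3 + Fin.castLE (by norm_num) k + 1) - X (3 + Fin.castLE (by norm_num) k)) * D k f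
        = rename (Equiv.swap (3 + Fin.castLE (by norm_num) k)
            (3 + Fin.castLE (by norm_num) k + 1)) f - f)
    (hT : ∀ k : Fin 3, ∀ f, T k f = -X 0 * f +
      ((X 1 + X 0 + X 2) * X (3 + Fin.castLE (by norm_num) k)
        + X 2 * X (3 + Fin.castLE (by norm_num) k + 1) + 1
        + (X 0 + X 2) * (X 1 + X 2) *
            (X (3 + Fin.castLE (by norm_num) k) * X (3 + Fin.castLE (by norm_num) k + 1)))
        * D k f) :
    (((Equiv.swap (0 : Fin 4) 1) * (Equiv.swap (1 : Fin 4) 2) * (Equiv.swap (2 : Fin 4) 3)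
        * (Equiv.swap (0 : Fin 4) 1) * (Equiv.swap (1 : Fin 4) 2)) =
      -- the permutation `w = (1 3 2 4)` in cycle notation, 0-based: 0↦2, 2↦1, 1↦3, 3↦0
      Equiv.swap (0 : Fin 4) 2 * Equiv.swap (2 : Fin 4) 1 * Equiv.swap (1 : Fin 4) 3) ∧
    ∃ d : Fin 7 →₀ ℕ,
      coeff d (T 0 (T 1 (T 2 (T 0 (T 1 (X 3 ^ 3 * X 4 ^ 2 * X 5)))))) < 0 := by
  refine ⟨by decide, exists_coeff_neg_of_aeval_neg negativePoint_nonneg ?_⟩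
  have hstep (k : Fin 3) {f} {F : (Fin 7 → ℚ) → ℚ}
      (hF : Set.EqOn (fun v ↦ aeval v f) F {v | v.Injective}) :=
    eqOn_aeval_kirillovOperator (by decide +revert) (hD k f) (hT k f) hF
  have hmonomial : Set.EqOn
      (fun v : Fin 7 → ℚ ↦ aeval v (X 3 ^ 3 * X 4 ^ 2 * X 5 : MvPolynomial (Fin 7) ℤ))
      (fun v ↦ v 3 ^ 3 * v 4 ^ 2 * v 5) {v | v.Injective} := by
    intro v _
    simp only [map_mul, map_pow, aeval_X]
  have hvalue := hstep 0 (hstep 1 (hstep 2 (hstep 0 (hstep 1 hmonomial)))) negativePoint_injective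
  exact hvalue.trans_lt kirillovOperator_comp_negativePoint_neg
end
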